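/- arXiv:2404.09152 — 3 statements merged into one kernel-verified Lean document; each statement's English description precedes it below -/
import Mathlib

section
/- Let a = (a_1,…,a_5) ∈ [0,1]^5 with a_1 + a_2 + a_3 + a_4 + a_5 = 4. Then f(a) ≤ 72/125, with equality if and only if a = (4/5, 4/5, 4/5, 4/5, 4/5). -/
noncomputable section

/-- The functional `f(x) = (1/256)·Σ_{i<j<k} [(xᵢ+xⱼ+xₖ)⁴ − (xᵢ+xⱼ)⁴ − (xᵢ+xₖ)⁴ − (xⱼ+xₖ)⁴
+ xᵢ⁴ + xⱼ⁴ + xₖ⁴]`. -/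
noncomputable def volDecF {N : ℕ} (x : Fin N → ℝ) : ℝ :=
  (1 / 256) * ∑ i : Fin N, ∑ j : Fin N, ∑ k : Fin N,
    if i < j ∧ j < k then
      (x i + x j + x k) ^ 4 - (x i + x j) ^ 4 - (x i + x k) ^ 4 - (x j + x k) ^ 4
        + x i ^ 4 + x j ^ 4 + x k ^ 4
    else 0

/-!
Each summand of `f` equals `12 xᵢxⱼxₖ(xᵢ + xⱼ + xₖ)`, so `f` is a polynomial in the power sums of
`x`. Write `x = m + d` with `m` the mean of `x` and `Dₖ = ∑ dᵢᵏ`. For five variables this gives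
`f(m, …, m) - f(x) = (3/128) (∑ dⱼ² (m + dⱼ) (3m - dⱼ) + (D₂² - D₄))`.
If `x ≥ 0` and `xᵢ` is the largest entry, then every summand with `j ≠ i` is nonnegative, since
`2 dⱼ ≤ dᵢ + dⱼ ≤ 3m`. The remaining summand may be negative, but
`D₂² - D₄ ≥ 2 dᵢ² ∑_{j ≠ i} dⱼ² ≥ dᵢ⁴ / 2` (Cauchy–Schwarz, using `∑ dⱼ = 0`) compensates for it
and leaves at least `3 m² dᵢ²`.
-/

section PowerSums

variable {K : Type*} [Field K] [CharZero K] {N : ℕ}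

theorem sum_pairs_mul_add_eq_sum_pow (x : Fin N → K) (c : K) :
    ∑ i, ∑ j, (if i < j then x i * x j * (c + x i + x j) else 0) =
      c * ((∑ i, x i) ^ 2 - ∑ i, x i ^ 2) / 2 + (∑ i, x i) * ∑ i, x i ^ 2 - ∑ i, x i ^ 3 := by
  induction N with
  | zero => simp
  | succ N ih =>
    have row_zero : ∑ j : Fin N, x 0 * x j.succ * (c + x 0 + x j.succ) =
        x 0 * ((c + x 0) * ∑ j : Fin N, x j.succ + ∑ j : Fin N, x j.succ ^ 2) := by
      simp only [Finset.mul_sum, ← Finset.sum_add_distrib]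
      exact Finset.sum_congr rfl fun j _ => by ring
    simp only [Fin.sum_univ_succ, Fin.succ_pos, Fin.not_lt_zero, if_true, if_false,
      Fin.succ_lt_succ_iff, zero_add, row_zero, ih fun j => x j.succ]
    ring

theorem sum_triples_mul_add_eq_sum_pow (x : Fin N → K) :
    ∑ i, ∑ j, ∑ k, (if i < j ∧ j < k then x i * x j * x k * (x i + x j + x k) else 0) =
      ((∑ i, x i) ^ 2 * ∑ i, x i ^ 2 - (∑ i, x i ^ 2) ^ 2) / 2
        - (∑ i, x i) * ∑ i, x i ^ 3 + ∑ i, x i ^ 4 := by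
  induction N with
  | zero => simp
  | succ N ih =>
    have slice_zero : ∑ j : Fin N, ∑ k : Fin N, (if j < k then
          x 0 * x j.succ * x k.succ * (x 0 + x j.succ + x k.succ) else 0) =
        x 0 * ∑ j : Fin N, ∑ k : Fin N, (if j < k then
          x j.succ * x k.succ * (x 0 + x j.succ + x k.succ) else 0) := by
      simp only [Finset.mul_sum, mul_ite, mul_zero, mul_assoc]
    simp only [Fin.sum_univ_succ, Fin.succ_pos, Fin.not_lt_zero, if_false,
      Fin.succ_lt_succ_iff, true_and, false_and, and_false, Finset.sum_const_zero, zero_add,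
      slice_zero, sum_pairs_mul_add_eq_sum_pow (fun j => x j.succ), ih fun j => x j.succ]
    ring

end PowerSums

theorem volDecF_eq_sum_pow {N : ℕ} (x : Fin N → ℝ) :
    volDecF x = 3 / 64 * (((∑ i, x i) ^ 2 * ∑ i, x i ^ 2 - (∑ i, x i ^ 2) ^ 2) / 2
      - (∑ i, x i) * ∑ i, x i ^ 3 + ∑ i, x i ^ 4) := by
  have summand_eq (u v w : ℝ) :
      (u + v + w) ^ 4 - (u + v) ^ 4 - (u + w) ^ 4 - (v + w) ^ 4 + u ^ 4 + v ^ 4 + w ^ 4 =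
        12 * (u * v * w * (u + v + w)) := by ring
  rw [← sum_triples_mul_add_eq_sum_pow, volDecF]
  simp only [summand_eq, ← mul_ite_zero, ← Finset.mul_sum]
  ring

theorem sum_const_add_of_sum_eq_zero {ι R : Type*} [Fintype ι] [CommSemiring R] (m : R)
    {d : ι → R} (hd : ∑ j, d j = 0) : ∑ j, (m + d j) = Fintype.card ι * m := by
  simp [Finset.sum_add_distrib, hd]

theorem volDecF_const_add {N : ℕ} (m : ℝ) {d : Fin N → ℝ} (hd : ∑ i, d i = 0) :
    volDecF (fun i => m + d i) = 3 / 64 *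
      (N * (N - 1) * (N - 2) / 2 * m ^ 4 + (N - 2) * (N - 6) / 2 * m ^ 2 * ∑ i, d i ^ 2
        - (N - 4) * m * ∑ i, d i ^ 3 - (∑ i, d i ^ 2) ^ 2 / 2 + ∑ i, d i ^ 4) := by
  have sum_one : ∑ i, (m + d i) = N * m := by
    rw [sum_const_add_of_sum_eq_zero m hd, Fintype.card_fin]
  have sum_two : ∑ i, (m + d i) ^ 2 = N * m ^ 2 + ∑ i, d i ^ 2 := by
    simp [add_sq, Finset.sum_add_distrib, ← Finset.mul_sum, hd]
  have sum_three : ∑ i, (m + d i) ^ 3 = N * m ^ 3 + 3 * m * ∑ i, d i ^ 2 + ∑ i, d i ^ 3 := by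
    have expand (i : Fin N) : (m + d i) ^ 3 =
        m ^ 3 + 3 * m ^ 2 * d i + 3 * m * d i ^ 2 + d i ^ 3 := by ring
    simp [expand, Finset.sum_add_distrib, ← Finset.mul_sum, hd]
  have sum_four : ∑ i, (m + d i) ^ 4 =
      N * m ^ 4 + 6 * m ^ 2 * ∑ i, d i ^ 2 + 4 * m * ∑ i, d i ^ 3 + ∑ i, d i ^ 4 := by
    have expand (i : Fin N) : (m + d i) ^ 4 =
        m ^ 4 + 4 * m ^ 3 * d i + 6 * m ^ 2 * d i ^ 2 + 4 * m * d i ^ 3 + d i ^ 4 := by ring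
    simp [expand, Finset.sum_add_distrib, ← Finset.mul_sum, hd]
  rw [volDecF_eq_sum_pow, sum_one, sum_two, sum_three, sum_four]
  ring

theorem volDecF_const (N : ℕ) (m : ℝ) :
    volDecF (fun _ : Fin N => m) = 3 / 64 * (N * (N - 1) * (N - 2) / 2 * m ^ 4) := by
  simpa using volDecF_const_add m (d := (0 : Fin N → ℝ)) (by simp)

section ZeroSum

variable {ι R : Type*} [Fintype ι] [CommRing R] [LinearOrder R] [IsStrictOrderedRing R]
  {m : R} {d : ι → R}

theorem nonneg_of_sum_eq_zero_of_forall_le (hd : ∑ j, d j = 0) {i : ι} (hmax : ∀ j, d j ≤ d i) :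
    0 ≤ d i := by
  obtain ⟨j, -, hj⟩ : ∃ j ∈ Finset.univ, 0 ≤ d j :=
    Finset.exists_le_of_sum_le ⟨i, Finset.mem_univ i⟩ (by simp [hd])
  exact hj.trans (hmax j)

theorem le_card_sub_one_mul_of_sum_eq_zero (hd : ∑ j, d j = 0) (hm : ∀ j, 0 ≤ m + d j) (i : ι) :
    d i ≤ (Fintype.card ι - 1) * m := by
  have le_sum := Finset.single_le_sum (fun j _ => hm j) (Finset.mem_univ i)
  rw [sum_const_add_of_sum_eq_zero m hd] at le_sum
  linarith

theorem add_le_card_sub_two_mul_of_sum_eq_zero (hd : ∑ j, d j = 0) (hm : ∀ j, 0 ≤ m + d j)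
    {i j : ι} (hij : i ≠ j) : d i + d j ≤ (Fintype.card ι - 2) * m := by
  have le_sum := Finset.add_le_sum (fun k _ => hm k) (Finset.mem_univ i) (Finset.mem_univ j) hij
  rw [sum_const_add_of_sum_eq_zero m hd] at le_sum
  linarith

variable [DecidableEq ι]

theorem sum_pow_four_add_le_sq_sum_sq (d : ι → R) (i : ι) :
    ∑ j, d j ^ 4 + 2 * d i ^ 2 * ∑ j ∈ Finset.univ.erase i, d j ^ 2 ≤ (∑ j, d j ^ 2) ^ 2 := by
  have rest : ∑ j ∈ Finset.univ.erase i, (d j ^ 2) ^ 2 ≤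
      (∑ j ∈ Finset.univ.erase i, d j ^ 2) ^ 2 :=
    Finset.sum_sq_le_sq_sum_of_nonneg fun j _ => sq_nonneg (d j)
  simp only [← pow_mul, Nat.reduceMul] at rest
  rw [← Finset.add_sum_erase _ _ (Finset.mem_univ i),
    ← Finset.add_sum_erase _ (fun j => d j ^ 2) (Finset.mem_univ i)]
  linarith

theorem sq_le_card_sub_one_mul_sum_erase_sq (hd : ∑ j, d j = 0) (i : ι) :
    d i ^ 2 ≤ (Fintype.card ι - 1) * ∑ j ∈ Finset.univ.erase i, d j ^ 2 := by
  have card_erase : ((Finset.univ.erase i).card : R) = Fintype.card ι - 1 := by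
    rw [Finset.cast_card_erase_of_mem (Finset.mem_univ i), Finset.card_univ]
  have eq_neg_sum : d i = -∑ j ∈ Finset.univ.erase i, d j := by
    rw [eq_neg_iff_add_eq_zero, Finset.add_sum_erase _ _ (Finset.mem_univ i), hd]
  rw [eq_neg_sum, neg_sq, ← card_erase]
  exact sq_sum_le_card_mul_sum_sq

end ZeroSum

theorem volDecF_const_add_five (m : ℝ) {d : Fin 5 → ℝ} (hd : ∑ j, d j = 0) :
    volDecF (fun j => m + d j) = 45 / 32 * m ^ 4
      - 3 / 128 * (∑ j, d j ^ 2 * (m + d j) * (3 * m - d j)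
        + ((∑ j, d j ^ 2) ^ 2 - ∑ j, d j ^ 4)) := by
  have sum_weights : ∑ j, d j ^ 2 * (m + d j) * (3 * m - d j) =
      3 * m ^ 2 * ∑ j, d j ^ 2 + 2 * m * ∑ j, d j ^ 3 - ∑ j, d j ^ 4 := by
    simp only [Finset.mul_sum, ← Finset.sum_add_distrib, ← Finset.sum_sub_distrib]
    exact Finset.sum_congr rfl fun j _ => by ring
  rw [volDecF_const_add m hd, sum_weights]
  push_cast
  ring

theorem three_mul_sq_mul_sq_le_sum_add_sub {m : ℝ} {d : Fin 5 → ℝ} (hd : ∑ j, d j = 0)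
    (hm : ∀ j, 0 ≤ m + d j) {i : Fin 5} (hmax : ∀ j, d j ≤ d i) :
    3 * m ^ 2 * d i ^ 2 ≤
      ∑ j, d j ^ 2 * (m + d j) * (3 * m - d j) + ((∑ j, d j ^ 2) ^ 2 - ∑ j, d j ^ 4) := by
  have rest_nonneg : 0 ≤ ∑ j ∈ Finset.univ.erase i, d j ^ 2 * (m + d j) * (3 * m - d j) := by
    refine Finset.sum_nonneg fun j hj => ?_
    have pair_le := add_le_card_sub_two_mul_of_sum_eq_zero hd hm (Finset.ne_of_mem_erase hj)
    simp only [Fintype.card_fin, Nat.cast_ofNat] at pair_le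
    have three_mul_sub_nonneg : 0 ≤ 3 * m - d j := by linarith [hmax j, hm j]
    exact mul_nonneg (mul_nonneg (sq_nonneg _) (hm j)) three_mul_sub_nonneg
  have quartic_le : d i ^ 4 / 2 ≤ (∑ j, d j ^ 2) ^ 2 - ∑ j, d j ^ 4 := by
    have cauchy := sq_le_card_sub_one_mul_sum_erase_sq hd i
    simp only [Fintype.card_fin, Nat.cast_ofNat] at cauchy
    have scaled := mul_le_mul_of_nonneg_left cauchy (sq_nonneg (d i))
    linarith [sum_pow_four_add_le_sq_sum_sq d i]
  have cubic_nonneg : 0 ≤ d i ^ 3 * (4 * m - d i) := by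
    have le_four_mul := le_card_sub_one_mul_of_sum_eq_zero hd hm i
    simp only [Fintype.card_fin, Nat.cast_ofNat] at le_four_mul
    have max_nonneg := nonneg_of_sum_eq_zero_of_forall_le hd hmax
    exact mul_nonneg (pow_nonneg max_nonneg 3) (by linarith)
  rw [← Finset.add_sum_erase _ _ (Finset.mem_univ i)]
  linarith

theorem volDecF_const_add_add_sq_le_of_forall_le {m : ℝ} {d : Fin 5 → ℝ} (hd : ∑ j, d j = 0)
    (hm : ∀ j, 0 ≤ m + d j) {i : Fin 5} (hmax : ∀ j, d j ≤ d i) :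
    volDecF (fun j => m + d j) + 9 / 128 * (m * d i) ^ 2 ≤ 45 / 32 * m ^ 4 := by
  rw [volDecF_const_add_five m hd]
  linarith [three_mul_sq_mul_sq_le_sum_add_sub hd hm hmax]

theorem eq_zero_of_volDecF_const_add_eq {m : ℝ} {d : Fin 5 → ℝ} (hd : ∑ j, d j = 0)
    (hm : ∀ j, 0 ≤ m + d j) (heq : volDecF (fun j => m + d j) = 45 / 32 * m ^ 4) : d = 0 := by
  obtain ⟨i, hmax⟩ := Finite.exists_max d
  have mean_mul_max : m * d i = 0 := by
    refine pow_eq_zero_iff two_ne_zero |>.1 (le_antisymm ?_ (sq_nonneg _))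
    linarith [volDecF_const_add_add_sq_le_of_forall_le hd hm hmax]
  have max_nonpos : d i ≤ 0 := by
    have le_four_mul := le_card_sub_one_mul_of_sum_eq_zero hd hm i
    rcases mul_eq_zero.1 mean_mul_max with m_zero | max_zero
    · simpa [m_zero] using le_four_mul
    · exact max_zero.le
  have d_nonpos (j : Fin 5) : d j ≤ 0 := (hmax j).trans max_nonpos
  exact funext fun j =>
    (Finset.sum_eq_zero_iff_of_nonpos fun k _ => d_nonpos k).1 hd j (Finset.mem_univ j)

theorem statement17_general (a : Fin 5 → ℝ) (ha : ∀ i, 0 ≤ a i) :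
    volDecF a ≤ 9 / 4000 * (∑ i, a i) ^ 4 ∧
    (volDecF a = 9 / 4000 * (∑ i, a i) ^ 4 ↔ a = fun _ => (∑ i, a i) / 5) := by
  obtain ⟨m, hm⟩ : ∃ m, m = (∑ i, a i) / 5 := ⟨_, rfl⟩
  obtain ⟨d, rfl⟩ : ∃ d : Fin 5 → ℝ, a = fun i => m + d i := ⟨fun i => a i - m, by simp⟩
  have hd : ∑ i, d i = 0 := by
    simp only [Finset.sum_add_distrib, Finset.sum_const, Finset.card_univ, Fintype.card_fin,
      nsmul_eq_mul, Nat.cast_ofNat] at hm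
    linarith
  have hbound : 9 / 4000 * (∑ i, (m + d i)) ^ 4 = 45 / 32 * m ^ 4 := by
    rw [sum_const_add_of_sum_eq_zero m hd, Fintype.card_fin]
    push_cast
    ring
  rw [hbound, ← hm]
  refine ⟨?_, fun heq => ?_, fun hconst => ?_⟩
  · obtain ⟨i, hmax⟩ := Finite.exists_max d
    linarith [volDecF_const_add_add_sq_le_of_forall_le hd ha hmax, sq_nonneg (m * d i)]
  · simp [eq_zero_of_volDecF_const_add_eq hd ha heq]
  · rw [hconst, volDecF_const]
    push_cast
    ring

/-- Let `a ∈ [0,1]⁵` with `a₁ + ⋯ + a₅ = 4`. Then `f(a) ≤ 72/125`, with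
equality iff `a = (4/5, 4/5, 4/5, 4/5, 4/5)`. -/
theorem statement17 (a : Fin 5 → ℝ) (ha : ∀ i, a i ∈ Set.Icc (0:ℝ) 1)
    (hsum : ∑ i, a i = 4) :
    volDecF a ≤ 72 / 125 ∧
    (volDecF a = 72 / 125 ↔ a = fun _ => 4 / 5) := by
  have hvalue : (9 / 4000 * 4 ^ 4 : ℝ) = 72 / 125 := by norm_num
  simpa only [hsum, hvalue] using statement17_general a fun i => (ha i).1

end
end

section
/- Let N ≥ 6 and let x ∈ (0,1]^N with Σ_{i=1}^N x_i = 4 (all coordinates strictly positive). Then x is not a maximum point of f on [0,1]^N ∩ {y : Σ y_i = 4}: there exists y ∈ [0,1]^N with Σ_{i=1}^N y_i = 4 and f(y) > f(x). -/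
noncomputable section

/-! On the slice `∑ xᵢ = 4` the functional is `3/16 * (e₃ - e₄)`, where `eₖ` are the elementary
symmetric functions, so it only depends on the multiset of coordinates and is affine in each of
them. Replacing two coordinates `a, b` by `p, q` with the same sum changes `e₃ - e₄` by
`(p * q - a * b) * (e₁ - e₂)`, with `e₁, e₂` taken over the remaining coordinates. At a maximum
this forces `e₁ ≤ e₂` whenever `a ≠ b` (move `a, b` to their mean) and `e₂ ≤ e₁` whenever
`a, b ∈ (0, 1)` (move them apart). Comparing two pairs that share a coordinate, all coordinates but
possibly the smallest are equal to the largest one. With at least six coordinates the largest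
is less than `1`, so `e₂ ≤ e₁` holds for the extreme pair; this leaves only the point with six
coordinates `2/3`, which `(1, 1, 1, 1, 0, 0)` beats. -/

section ElementarySymmetric

variable {R : Type*} [CommSemiring R]

lemma esymm_zero_right (s : Multiset R) : s.esymm 0 = 1 := by
  simp [Multiset.esymm]

lemma esymm_one_right (s : Multiset R) : s.esymm 1 = s.sum := by
  simp [Multiset.esymm, Multiset.powersetCard_one]

lemma esymm_zero_left (k : ℕ) : (0 : Multiset R).esymm (k + 1) = 0 := by
  simp [Multiset.esymm, Multiset.powersetCard_zero_right]

lemma esymm_cons (a : R) (s : Multiset R) (k : ℕ) :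
    (a ::ₘ s).esymm (k + 1) = s.esymm (k + 1) + a * s.esymm k := by
  simp [Multiset.esymm, Multiset.powersetCard_cons, Multiset.sum_map_mul_left]

lemma esymm_replicate (n k : ℕ) (a : R) :
    (Multiset.replicate n a).esymm k = n.choose k * a ^ k := by
  have prod_eq : ∀ t ∈ (Multiset.replicate n a).powersetCard k, t.prod = a ^ k := by
    intro t ht
    obtain ⟨ht_le, ht_card⟩ := Multiset.mem_powersetCard.1 ht
    rw [Multiset.eq_replicate.2
      ⟨ht_card, fun b hb ↦ Multiset.eq_of_mem_replicate (Multiset.mem_of_le ht_le hb)⟩,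
      Multiset.prod_replicate]
  rw [Multiset.esymm, Multiset.map_congr rfl prod_eq]
  simp

lemma sum_powersetCard_prod_mul_sum_add (s : Multiset R) (k : ℕ) :
    ((s.powersetCard k).map fun t ↦ t.prod * t.sum).sum + (k + 1) * s.esymm (k + 1) =
      s.sum * s.esymm k := by
  induction s using Multiset.induction_on generalizing k with
  | empty => cases k <;> simp [esymm_zero_left, Multiset.powersetCard_zero_right]
  | cons a s ih =>
    cases k with
    | zero => simp [esymm_zero_right, esymm_one_right]
    | succ k =>
      have split_sum : (((a ::ₘ s).powersetCard (k + 1)).map fun t ↦ t.prod * t.sum).sum =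
          ((s.powersetCard (k + 1)).map fun t ↦ t.prod * t.sum).sum +
            (a ^ 2 * s.esymm k + a * ((s.powersetCard k).map fun t ↦ t.prod * t.sum).sum) := by
        simp only [Multiset.powersetCard_cons, Multiset.map_add, Multiset.sum_add,
          Multiset.map_map, Function.comp_def, Multiset.prod_cons, Multiset.sum_cons,
          Multiset.esymm, ← Multiset.sum_map_mul_left, ← Multiset.sum_map_add]
        congr 3
        funext t
        ring
      rw [split_sum, esymm_cons, esymm_cons, Multiset.sum_cons]
      calc
        _ = (((s.powersetCard (k + 1)).map fun t ↦ t.prod * t.sum).sum +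
              ((k + 1 : ℕ) + 1) * s.esymm (k + 1 + 1)) +
            a * (((s.powersetCard k).map fun t ↦ t.prod * t.sum).sum +
              (k + 1) * s.esymm (k + 1)) +
            a * (s.esymm (k + 1) + a * s.esymm k) := by push_cast; ring
        _ = (a + s.sum) * (s.esymm (k + 1) + a * s.esymm k) := by rw [ih, ih]; ring

end ElementarySymmetric

lemma exists_map_univ_eq {α : Type*} {n : ℕ} (s : Multiset α) (hs : s.card = n) :
    ∃ x : Fin n → α, Finset.univ.val.map x = s := by
  obtain ⟨l, rfl⟩ : ∃ l : List α, l = s := ⟨s.toList, s.coe_toList⟩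
  obtain rfl : l.length = n := hs
  exact ⟨l.get, by rw [Fin.univ_val_map, List.ofFn_get]⟩

section Extrema

variable {α : Type*} [LinearOrder α]

lemma multiset_exists_max (s : Multiset α) (hs : s ≠ 0) : ∃ a ∈ s, ∀ b ∈ s, b ≤ a := by
  simpa using s.toFinset.exists_max_image id (by simpa using hs)

lemma multiset_exists_min (s : Multiset α) (hs : s ≠ 0) : ∃ a ∈ s, ∀ b ∈ s, a ≤ b :=
  multiset_exists_max (α := αᵒᵈ) s hs

end Extrema

section OrderedTuples

variable {α M : Type*} [AddCommMonoid M]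

lemma sum_powersetCard_two_ofFn (F : Multiset α → M) {n : ℕ} (x : Fin n → α) :
    (((List.ofFn x : Multiset α).powersetCard 2).map F).sum =
      ∑ i, ∑ j, if i < j then F {x i, x j} else 0 := by
  induction n with
  | zero => simp [Multiset.powersetCard_zero_right]
  | succ n ih =>
    rw [List.ofFn_succ, ← Multiset.cons_coe, Multiset.powersetCard_cons, Multiset.map_add,
      Multiset.sum_add, ih, add_comm]
    simp [Fin.sum_univ_succ, Multiset.powersetCard_one, List.sum_ofFn, Function.comp_def]

lemma sum_powersetCard_three_ofFn (F : Multiset α → M) {n : ℕ} (x : Fin n → α) :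
    (((List.ofFn x : Multiset α).powersetCard 3).map F).sum =
      ∑ i, ∑ j, ∑ k, if i < j ∧ j < k then F {x i, x j, x k} else 0 := by
  induction n with
  | zero => simp [Multiset.powersetCard_zero_right]
  | succ n ih =>
    rw [List.ofFn_succ, ← Multiset.cons_coe, Multiset.powersetCard_cons, Multiset.map_add,
      Multiset.sum_add, ih, Multiset.map_map, sum_powersetCard_two_ofFn, add_comm]
    simp [Fin.sum_univ_succ]

end OrderedTuples

lemma volDecF_eq_esymm {N : ℕ} (x : Fin N → ℝ) :
    volDecF x = 3 / 64 * ((Finset.univ.val.map x).sum * (Finset.univ.val.map x).esymm 3 -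
      4 * (Finset.univ.val.map x).esymm 4) := by
  have summand_eq (i j k : Fin N) :
      (x i + x j + x k) ^ 4 - (x i + x j) ^ 4 - (x i + x k) ^ 4 - (x j + x k) ^ 4
        + x i ^ 4 + x j ^ 4 + x k ^ 4 =
      12 * (({x i, x j, x k} : Multiset ℝ).prod * ({x i, x j, x k} : Multiset ℝ).sum) := by
    simp only [Multiset.insert_eq_cons, Multiset.prod_cons, Multiset.prod_singleton,
      Multiset.sum_cons, Multiset.sum_singleton]
    ring
  have weighted_sum := sum_powersetCard_prod_mul_sum_add (Finset.univ.val.map x) 3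
  simp only [volDecF, summand_eq]
  rw [← sum_powersetCard_three_ofFn (fun t ↦ 12 * (t.prod * t.sum)), ← Fin.univ_val_map,
    Multiset.sum_map_mul_left]
  push_cast at weighted_sum
  linear_combination 3 / 64 * weighted_sum

/-- The difference `e₃ - e₄` of elementary symmetric functions, which is `16 / 3` times `volDecF` on
tuples of sum `4`. Multisets are used because it does not depend on the order of the coordinates. -/
def esymmGap (s : Multiset ℝ) : ℝ := s.esymm 3 - s.esymm 4

lemma volDecF_eq_esymmGap {N : ℕ} (x : Fin N → ℝ) (hsum : ∑ i, x i = 4) :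
    volDecF x = 3 / 16 * esymmGap (Finset.univ.val.map x) := by
  have sum_eq : (Finset.univ.val.map x).sum = 4 := hsum
  rw [volDecF_eq_esymm, esymmGap, sum_eq]
  ring

/-- The slice `{x ∈ [0, 1]ⁿ : ∑ xᵢ = c}` of the unit cube, up to permuting coordinates. -/
def cubeSlice (n : ℕ) (c : ℝ) : Set (Multiset ℝ) :=
  {s | s.card = n ∧ (∀ a ∈ s, a ∈ Set.Icc 0 1) ∧ s.sum = c}

lemma esymmGap_cons_cons (a b : ℝ) (r : Multiset ℝ) :
    esymmGap (a ::ₘ b ::ₘ r) = esymmGap r + (a + b) * (r.esymm 2 - r.esymm 3) +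
      a * b * (r.sum - r.esymm 2) := by
  simp only [esymmGap, esymm_cons, esymm_one_right]
  ring

section Maximizer

variable {n : ℕ} {c a b d : ℝ} {r : Multiset ℝ}

lemma exchange_nonpos_of_isMaxOn (hmem : a ::ₘ b ::ₘ r ∈ cubeSlice n c)
    (hmax : IsMaxOn esymmGap (cubeSlice n c) (a ::ₘ b ::ₘ r)) {a' b' : ℝ}
    (ha' : a' ∈ Set.Icc 0 1) (hb' : b' ∈ Set.Icc 0 1) (hadd : a' + b' = a + b) :
    (a' * b' - a * b) * (r.sum - r.esymm 2) ≤ 0 := by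
  obtain ⟨hcard, hIcc, hsum⟩ := hmem
  simp only [Multiset.card_cons, Multiset.forall_mem_cons, Multiset.sum_cons] at hcard hIcc hsum
  have hmem' : a' ::ₘ b' ::ₘ r ∈ cubeSlice n c :=
    ⟨by simpa using hcard, by simpa using ⟨ha', hb', hIcc.2.2⟩, by
      simp only [Multiset.sum_cons]; linarith⟩
  have hle : esymmGap (a' ::ₘ b' ::ₘ r) ≤ esymmGap (a ::ₘ b ::ₘ r) := hmax hmem'
  rw [esymmGap_cons_cons, esymmGap_cons_cons, hadd] at hle
  linarith

lemma sum_le_esymm_two_of_isMaxOn (hmem : a ::ₘ b ::ₘ r ∈ cubeSlice n c)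
    (hmax : IsMaxOn esymmGap (cubeSlice n c) (a ::ₘ b ::ₘ r)) (hne : a ≠ b) :
    r.sum ≤ r.esymm 2 := by
  obtain ⟨ha0, ha1⟩ := hmem.2.1 a (by simp)
  obtain ⟨hb0, hb1⟩ := hmem.2.1 b (by simp)
  have mean_mem : (a + b) / 2 ∈ Set.Icc (0 : ℝ) 1 := ⟨by linarith, by linarith⟩
  have hexch := exchange_nonpos_of_isMaxOn hmem hmax mean_mem mean_mem (add_halves _)
  have prod_lt : 0 < (a + b) / 2 * ((a + b) / 2) - a * b := by
    linarith [sq_pos_of_ne_zero (sub_ne_zero.2 hne)]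
  linarith [nonpos_of_mul_nonpos_right hexch prod_lt]

lemma esymm_two_le_sum_of_isMaxOn (hmem : a ::ₘ b ::ₘ r ∈ cubeSlice n c)
    (hmax : IsMaxOn esymmGap (cubeSlice n c) (a ::ₘ b ::ₘ r))
    (ha : a ∈ Set.Ioo 0 1) (hb : b ∈ Set.Ioo 0 1) :
    r.esymm 2 ≤ r.sum := by
  wlog hba : b ≤ a generalizing a b
  · rw [Multiset.cons_swap] at hmem hmax
    exact this hmem hmax hb ha (le_of_not_ge hba)
  obtain ⟨t, ht0, htb, hta⟩ : ∃ t, 0 < t ∧ t ≤ b ∧ t ≤ 1 - a :=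
    ⟨min b (1 - a), lt_min hb.1 (sub_pos.2 ha.2), min_le_left _ _, min_le_right _ _⟩
  have hexch := exchange_nonpos_of_isMaxOn hmem hmax (a' := a + t) (b' := b - t)
    ⟨by linarith [ha.1], by linarith⟩ ⟨by linarith, by linarith [hb.2]⟩ (by ring)
  have prod_lt : (a + t) * (b - t) - a * b < 0 := by
    nlinarith [mul_pos ht0 ht0, mul_nonneg ht0.le (sub_nonneg.2 hba)]
  linarith [nonneg_of_mul_nonpos_right hexch prod_lt]

lemma eq_of_isMaxOn_of_lt (hmem : a ::ₘ b ::ₘ d ::ₘ r ∈ cubeSlice n c)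
    (hmax : IsMaxOn esymmGap (cubeSlice n c) (a ::ₘ b ::ₘ d ::ₘ r))
    (hb : b ∈ Set.Ioo 0 1) (hd : d ∈ Set.Ioo 0 1) (hda : d < a) (hr : 1 < r.sum) :
    a = b := by
  by_contra hne
  have without_ab := sum_le_esymm_two_of_isMaxOn hmem hmax hne
  have swap : a ::ₘ b ::ₘ d ::ₘ r = b ::ₘ d ::ₘ a ::ₘ r := by
    rw [Multiset.cons_swap a b, Multiset.cons_swap a d]
  rw [swap] at hmem hmax
  have without_bd := esymm_two_le_sum_of_isMaxOn hmem hmax hb hd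
  simp only [Multiset.sum_cons, esymm_cons, esymm_one_right] at without_ab without_bd
  linarith [mul_pos (sub_pos.2 hda) (sub_pos.2 hr)]

lemma exists_eq_cons_cons_replicate_of_isMaxOn {s : Multiset ℝ} (hc : 4 ≤ c)
    (hmem : s ∈ cubeSlice (n + 2) c) (hmax : IsMaxOn esymmGap (cubeSlice (n + 2) c) s)
    (hpos : ∀ a ∈ s, 0 < a) :
    ∃ a d, d ≤ a ∧ s = a ::ₘ d ::ₘ Multiset.replicate n a := by
  have ⟨hcard, hIcc, hsum⟩ := hmem
  obtain ⟨a, ha, a_max⟩ := multiset_exists_max s (by rintro rfl; simp at hcard)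
  obtain ⟨s, rfl⟩ := Multiset.exists_cons_of_mem ha
  obtain ⟨d, hd, d_min⟩ := multiset_exists_min s (by rintro rfl; simp at hcard)
  obtain ⟨s, rfl⟩ := Multiset.exists_cons_of_mem hd
  simp only [Multiset.card_cons, Multiset.forall_mem_cons, Nat.add_right_cancel_iff]
    at hcard hIcc hpos a_max d_min
  refine ⟨a, d, a_max.2.1, ?_⟩
  rw [← Multiset.eq_replicate.2 ⟨hcard, fun b hb ↦ ?_⟩]
  by_contra hba
  have b_lt_a : b < a := lt_of_le_of_ne (a_max.2.2 b hb) hba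
  have d_lt_a : d < a := (d_min.2 b hb).trans_lt b_lt_a
  obtain ⟨r, rfl⟩ := Multiset.exists_cons_of_mem hb
  rw [Multiset.cons_swap d b] at hmem hmax
  have rest_gt : 1 < r.sum := by
    simp only [Multiset.sum_cons] at hsum
    linarith [hIcc.1.2]
  exact hba (eq_of_isMaxOn_of_lt hmem hmax
    ⟨hpos.2.2 b hb, b_lt_a.trans_le hIcc.1.2⟩ ⟨hpos.2.1, d_lt_a.trans_le hIcc.1.2⟩ d_lt_a
    rest_gt).symm

end Maximizer

lemma eq_four_and_eq_two_thirds_of_choose_two_mul_sq_le {m : ℕ} {a d : ℝ} (hm : 4 ≤ m)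
    (ha : 0 < a) (hda : d ≤ a) (hsum : a + (d + m * a) = 4) (hesymm : m.choose 2 * a ^ 2 ≤ m * a) :
    m = 4 ∧ a = 2 / 3 ∧ d = 2 / 3 := by
  have hm' : (4 : ℝ) ≤ m := by exact_mod_cast hm
  have pair_bound : (m - 1) * a ≤ 2 := by
    rw [Nat.cast_choose_two] at hesymm
    refine le_of_mul_le_mul_left ?_ (show 0 < m * a by positivity)
    linarith
  have m_le : (m : ℝ) ≤ 4 := by
    have excess_nonpos : (m - 4) * a ≤ 0 := by linarith
    exact sub_nonpos.1 (nonpos_of_mul_nonpos_left excess_nonpos ha)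
  have m_eq : m = 4 := le_antisymm (by exact_mod_cast m_le) hm
  subst m_eq
  norm_num at hsum pair_bound
  exact ⟨rfl, by linarith, by linarith⟩

lemma esymmGap_replicate_six_lt :
    esymmGap (Multiset.replicate 6 (2 / 3)) < esymmGap {1, 1, 1, 1, 0, 0} := by
  have value_left : esymmGap (Multiset.replicate 6 (2 / 3)) = 80 / 27 := by
    simp only [esymmGap, esymm_replicate]
    norm_num [Nat.choose]
  have value_right : esymmGap {1, 1, 1, 1, 0, 0} = 3 := by
    simp only [esymmGap, Multiset.insert_eq_cons, ← Multiset.cons_zero, esymm_cons,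
      esymm_zero_left, esymm_zero_right]
    norm_num
  rw [value_left, value_right]
  norm_num

lemma not_isMaxOn_esymmGap {n : ℕ} {s : Multiset ℝ} (hn : 6 ≤ n) (hmem : s ∈ cubeSlice n 4)
    (hpos : ∀ a ∈ s, 0 < a) :
    ¬IsMaxOn esymmGap (cubeSlice n 4) s := by
  intro hmax
  obtain ⟨m, rfl⟩ := Nat.exists_eq_add_of_le' (show 2 ≤ n by lia)
  obtain ⟨a, d, hda, rfl⟩ := exists_eq_cons_cons_replicate_of_isMaxOn le_rfl hmem hmax hpos
  have ha : 0 < a := hpos a (by simp)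
  have hd : 0 < d := hpos d (by simp)
  have hm : 4 ≤ m := by lia
  have hsum : a + (d + m * a) = 4 := by simpa using hmem.2.2
  have ha_lt : a < 1 := by
    have : (4 : ℝ) ≤ m := by exact_mod_cast hm
    nlinarith
  have hesymm := esymm_two_le_sum_of_isMaxOn hmem hmax ⟨ha, ha_lt⟩ ⟨hd, hda.trans_lt ha_lt⟩
  rw [esymm_replicate, Multiset.sum_replicate, nsmul_eq_mul] at hesymm
  obtain ⟨rfl, rfl, rfl⟩ :=
    eq_four_and_eq_two_thirds_of_choose_two_mul_sq_le hm ha hda hsum hesymm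
  have vertex_mem : {1, 1, 1, 1, 0, 0} ∈ cubeSlice 6 4 := ⟨by simp, by simp, by norm_num⟩
  exact (hmax vertex_mem).not_gt esymmGap_replicate_six_lt

/-- Let `N ≥ 6` and `x ∈ (0,1]ᴺ` with `Σ xᵢ = 4`. Then `x` is not a maximum
point of `f` on `[0,1]ᴺ ∩ {Σ yᵢ = 4}`: some `y` in that set has `f(y) > f(x)`. -/
theorem statement18 {N : ℕ} (hN : 6 ≤ N) (x : Fin N → ℝ)
    (hx : ∀ i, 0 < x i ∧ x i ≤ 1) (hsum : ∑ i, x i = 4) :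
    ∃ y : Fin N → ℝ, (∀ i, y i ∈ Set.Icc (0:ℝ) 1) ∧ ∑ i, y i = 4 ∧ volDecF x < volDecF y := by
  have hmem : Finset.univ.val.map x ∈ cubeSlice N 4 :=
    ⟨by simp, by simpa using fun i ↦ ⟨(hx i).1.le, (hx i).2⟩, hsum⟩
  have hpos : ∀ a ∈ Finset.univ.val.map x, 0 < a := by simpa using fun i ↦ (hx i).1
  obtain ⟨t, ⟨ht_card, ht_mem, ht_sum⟩, hlt⟩ :
      ∃ t ∈ cubeSlice N 4, esymmGap (Finset.univ.val.map x) < esymmGap t := by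
    simpa [isMaxOn_iff] using not_isMaxOn_esymmGap hN hmem hpos
  obtain ⟨y, rfl⟩ := exists_map_univ_eq t ht_card
  refine ⟨y, by simpa using ht_mem, ht_sum, ?_⟩
  rw [volDecF_eq_esymmGap x hsum, volDecF_eq_esymmGap y ht_sum]
  gcongr

end
end

section
/- Let N ≥ 5 and let x ∈ [0,1]^N with Σ_{i=1}^N x_i = 4. Then f(x) ≤ 72/125, with equality if and only if there exists a 5-element subset {i_1,…,i_5} ⊆ {1,…,N} such that x_{i_j} = 4/5 for j = 1,…,5 and x_i = 0 for all other indices i. -/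
noncomputable section

/-!
Write `pₘ = ∑ xᵢ ^ m`. On the hyperplane `p₁ = 4` the functional equals
`3/16 * (2 p₂ - p₂² / 8 - p₃ + p₄ / 4)`. The only nonseparable term `-p₂² / 8` is concave in `p₂`,
so replacing it by its tangent at any `c` bounds the expression in parentheses by
`c² / 8 + ∑ φ_c(xᵢ)`, where `φ_c` is a quartic polynomial. A suitable `c` makes this at most
`384/125`:

* If some `xᵢ ≥ 2`, then `c = xᵢ²` gives the bound `3`.
* Otherwise let `k` be the number of coordinates `≥ 1/5`. If `k ≥ 5`, take for `c` the value `16/5`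
  of `p₂` at the maximizer. The tangent `64/125 t - 32/625` of `φ_c` at `4/5` dominates `φ_c` on
  `[1/5, 2]`, and its linear part does so on `[0, 1/5]`. Each of the `k` large coordinates thus
  contributes a negative constant, and the total is at most `384/125`.
* If `k ≤ 4`, take `c = 18/5` and argue in the same way with the tangent `t/5 + 3/20` of `φ_c` at
  `1`. Its constant term is positive, and the total is at most `151/50`.
-/

open Finset

section OrderedSums

variable {R : Type*} [CommRing R] {N : ℕ}

lemma two_mul_sum_lt_mul (x : Fin N → R) :
    2 * ∑ i, ∑ j, (if i < j then x i * x j else 0) = (∑ i, x i) ^ 2 - ∑ i, x i ^ 2 := by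
  induction N with
  | zero => simp
  | succ n ih =>
    simp only [Fin.sum_univ_succ, Fin.succ_lt_succ_iff, Fin.succ_pos, Fin.not_lt_zero,
      if_true, if_false, zero_add, ← mul_sum]
    linear_combination ih fun i => x i.succ

lemma sum_lt_mul_mul_add (x : Fin N → R) :
    ∑ i, ∑ j, (if i < j then x i * x j * (x i + x j) else 0)
      = (∑ i, x i) * ∑ i, x i ^ 2 - ∑ i, x i ^ 3 := by
  induction N with
  | zero => simp
  | succ n ih =>
    have sum_pairs_zero : ∑ j : Fin n, x 0 * x j.succ * (x 0 + x j.succ)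
        = x 0 ^ 2 * ∑ j : Fin n, x j.succ + x 0 * ∑ j : Fin n, x j.succ ^ 2 := by
      rw [mul_sum, mul_sum, ← sum_add_distrib]
      exact sum_congr rfl fun j _ => by ring
    simp only [Fin.sum_univ_succ, Fin.succ_lt_succ_iff, Fin.succ_pos, Fin.not_lt_zero,
      if_true, if_false, zero_add, sum_pairs_zero]
    linear_combination ih fun i => x i.succ

lemma two_mul_sum_lt_lt_mul_mul_mul_add (x : Fin N → R) :
    2 * ∑ i, ∑ j, ∑ k, (if i < j ∧ j < k then x i * x j * x k * (x i + x j + x k) else 0)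
      = (∑ i, x i) ^ 2 * ∑ i, x i ^ 2 - (∑ i, x i ^ 2) ^ 2
        - 2 * (∑ i, x i) * ∑ i, x i ^ 3 + 2 * ∑ i, x i ^ 4 := by
  induction N with
  | zero => simp
  | succ n ih =>
    have sum_triples_zero : ∑ j : Fin n, ∑ k : Fin n,
          (if j < k then x 0 * x j.succ * x k.succ * (x 0 + x j.succ + x k.succ) else 0)
        = x 0 ^ 2 * ∑ j : Fin n, ∑ k : Fin n, (if j < k then x j.succ * x k.succ else 0)
          + x 0 * ∑ j : Fin n, ∑ k : Fin n,
            (if j < k then x j.succ * x k.succ * (x j.succ + x k.succ) else 0) := by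
      simp only [mul_sum, ← sum_add_distrib]
      refine sum_congr rfl fun j _ => sum_congr rfl fun k _ => ?_
      split_ifs <;> ring
    simp only [Fin.sum_univ_succ, Fin.succ_lt_succ_iff, Fin.succ_pos, Fin.not_lt_zero,
      if_false, zero_add, true_and, false_and, and_false, sum_const_zero,
      sum_triples_zero]
    linear_combination ih (fun i => x i.succ) + x 0 ^ 2 * two_mul_sum_lt_mul (fun i => x i.succ)
      + 2 * x 0 * sum_lt_mul_mul_add fun i => x i.succ

end OrderedSums

section FiniteSums

variable {ι : Type*} [Fintype ι]

lemma sum_comp_eq_card_nsmul {α M : Type*} [Zero α] [AddCommMonoid M] {x : ι → α} {s : Finset ι}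
    {a : α} (hs : ∀ i ∈ s, x i = a) (hs' : ∀ i ∉ s, x i = 0) {h : α → M} (h0 : h 0 = 0) :
    ∑ i, h (x i) = #s • h a := by
  calc ∑ i, h (x i) = ∑ i ∈ s, h (x i) :=
        (sum_subset (subset_univ s) fun i _ hi => by rw [hs' i hi, h0]).symm
    _ = #s • h a := by rw [sum_congr rfl fun i hi => by rw [hs i hi], sum_const]

lemma exists_card_eq_of_eq_zero_or_eq {R : Type*} [Semiring R] [IsCancelMulZero R] [CharZero R]
    {x : ι → R} {a : R} {n : ℕ} (ha : a ≠ 0) (hx : ∀ i, x i = 0 ∨ x i = a)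
    (hsum : ∑ i, x i = n * a) :
    ∃ s : Finset ι, #s = n ∧ (∀ i ∈ s, x i = a) ∧ ∀ i ∉ s, x i = 0 := by
  classical
  let s : Finset ι := {i | x i = a}
  have hs : ∀ i ∈ s, x i = a := fun i hi => (mem_filter.1 hi).2
  have hs' : ∀ i ∉ s, x i = 0 := fun i hi =>
    (hx i).resolve_right fun h => hi (mem_filter.2 ⟨mem_univ i, h⟩)
  have card_mul : (#s : R) * a = n * a := by
    rw [← hsum, sum_comp_eq_card_nsmul hs hs' (h := fun t => t) rfl, nsmul_eq_mul]
  exact ⟨s, by exact_mod_cast mul_right_cancel₀ ha card_mul, hs, hs'⟩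

lemma sum_mul_add_ite_le {R : Type*} [NonAssocSemiring R] [LE R] [DecidableLE R]
    (x : ι → R) (a b r : R) :
    ∑ i, (a * x i + if r ≤ x i then b else 0) = a * ∑ i, x i + #{i | r ≤ x i} * b := by
  rw [sum_add_distrib, ← mul_sum, ← sum_filter, sum_const, nsmul_eq_mul]

end FiniteSums

/-- The summand `φ_c` of the separable majorant of `2 p₂ - p₂² / 8 - p₃ + p₄ / 4` obtained by
replacing `-p₂² / 8` with its tangent `c² / 8 - c p₂ / 4` at `p₂ = c`; the constant `c² / 8` is not
included. -/
def tangentQuartic (c t : ℝ) : ℝ := (2 - c / 4) * t ^ 2 - t ^ 3 + t ^ 4 / 4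

lemma tangentQuartic_sixteen_fifths_lt {t : ℝ} (ht0 : 0 < t) (ht2 : t ≤ 2) (ht : t ≠ 4 / 5) :
    tangentQuartic (16 / 5) t < 64 / 125 * t + if 1 / 5 ≤ t then -(32 / 625) else 0 := by
  unfold tangentQuartic
  split_ifs with hlarge
  · have cofactor_pos : 0 < -(t ^ 2 / 4) + 3 / 5 * t - 2 / 25 := by nlinarith
    have sq_pos : 0 < (t - 4 / 5) ^ 2 := sq_pos_of_ne_zero (sub_ne_zero.2 ht)
    linear_combination mul_pos sq_pos cofactor_pos
  · have cofactor_pos : 0 < 64 / 125 - 6 / 5 * t + t ^ 2 - t ^ 3 / 4 := by nlinarith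
    linear_combination mul_pos ht0 cofactor_pos

lemma tangentQuartic_sixteen_fifths_le {t : ℝ} (ht0 : 0 ≤ t) (ht2 : t ≤ 2) :
    tangentQuartic (16 / 5) t ≤ 64 / 125 * t + if 1 / 5 ≤ t then -(32 / 625) else 0 := by
  rcases ht0.eq_or_lt with rfl | hpos
  · norm_num [tangentQuartic]
  rcases eq_or_ne t (4 / 5) with rfl | hne
  · norm_num [tangentQuartic]
  exact (tangentQuartic_sixteen_fifths_lt hpos ht2 hne).le

lemma tangentQuartic_eighteen_fifths_le {t : ℝ} (ht0 : 0 ≤ t) (ht2 : t ≤ 2) :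
    tangentQuartic (18 / 5) t ≤ 1 / 5 * t + if 1 / 5 ≤ t then 3 / 20 else 0 := by
  unfold tangentQuartic
  split_ifs with ht
  · have cofactor_nonneg : 0 ≤ -(t ^ 2 / 4) + t / 2 + 3 / 20 := by nlinarith
    linear_combination mul_nonneg (sq_nonneg (t - 1)) cofactor_nonneg
  · have cofactor_nonneg : 0 ≤ 1 / 5 - 11 / 10 * t + t ^ 2 - t ^ 3 / 4 := by nlinarith
    linear_combination mul_nonneg ht0 cofactor_nonneg

lemma tangentQuartic_le_half_of_four_le {c t : ℝ} (hc : 4 ≤ c) (ht0 : 0 ≤ t) (ht2 : t ≤ 2) :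
    tangentQuartic c t ≤ t / 2 := by
  have cofactor_le : t * (2 - t) ^ 2 ≤ 2 := by nlinarith [sq_nonneg (t - 1), sq_nonneg (t - 2 / 3)]
  calc tangentQuartic c t ≤ t ^ 2 - t ^ 3 + t ^ 4 / 4 := by
        unfold tangentQuartic; nlinarith [sq_nonneg t]
    _ = t * (t * (2 - t) ^ 2) / 4 := by ring
    _ ≤ t / 2 := by linarith [mul_le_mul_of_nonneg_left cofactor_le ht0]

section Functional

variable {N : ℕ} {x : Fin N → ℝ}

lemma volDecF_eq_powerSums (x : Fin N → ℝ) :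
    volDecF x = 3 / 128 * ((∑ i, x i) ^ 2 * ∑ i, x i ^ 2 - (∑ i, x i ^ 2) ^ 2
      - 2 * (∑ i, x i) * ∑ i, x i ^ 3 + 2 * ∑ i, x i ^ 4) := by
  rw [← two_mul_sum_lt_lt_mul_mul_mul_add]
  simp only [volDecF, mul_sum]
  refine sum_congr rfl fun i _ => sum_congr rfl fun j _ => sum_congr rfl fun k _ => ?_
  split_ifs <;> ring

lemma volDecF_eq_tangentQuartic (hsum : ∑ i, x i = 4) (c : ℝ) :
    volDecF x = 3 / 16 * (c ^ 2 / 8 + ∑ i, tangentQuartic c (x i)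
      - (∑ i, x i ^ 2 - c) ^ 2 / 8) := by
  simp only [volDecF_eq_powerSums, hsum, tangentQuartic, sum_add_distrib, sum_sub_distrib,
    ← mul_sum, ← sum_div]
  ring

lemma volDecF_le_tangentQuartic (hsum : ∑ i, x i = 4) (c : ℝ) :
    volDecF x ≤ 3 / 16 * (c ^ 2 / 8 + ∑ i, tangentQuartic c (x i)) := by
  rw [volDecF_eq_tangentQuartic hsum c]
  linarith [sq_nonneg (∑ i, x i ^ 2 - c)]

lemma volDecF_lt_of_exists_two_le (hx : ∀ i, 0 ≤ x i) (hsum : ∑ i, x i = 4)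
    (hbig : ∃ i, 2 ≤ x i) : volDecF x < 72 / 125 := by
  obtain ⟨i, hi⟩ := hbig
  have sum_others : ∑ j ∈ univ.erase i, x j = 4 - x i := by
    rw [← hsum, ← add_sum_erase univ x (mem_univ i), add_sub_cancel_left]
  have other_le_two : ∀ j ∈ univ.erase i, x j ≤ 2 := fun j hj => by
    linarith [single_le_sum (fun k _ => hx k) hj]
  have sum_tangentQuartic_others :
      ∑ j ∈ univ.erase i, tangentQuartic (x i ^ 2) (x j) ≤ (4 - x i) / 2 := by
    rw [← sum_others, sum_div]
    exact sum_le_sum fun j hj =>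
      tangentQuartic_le_half_of_four_le (by nlinarith) (hx j) (other_le_two j hj)
  have big_term_le : (x i ^ 2) ^ 2 / 8 + tangentQuartic (x i ^ 2) (x i) ≤ 2 := by
    have le_four : x i ≤ 4 := hsum ▸ single_le_sum (fun k _ => hx k) (mem_univ i)
    have prod_nonneg : 0 ≤ x i * (4 - x i) := mul_nonneg (hx i) (by linarith)
    have prod_le_four : x i * (4 - x i) ≤ 4 := by linarith [sq_nonneg (x i - 2)]
    unfold tangentQuartic
    linarith [pow_le_pow_left₀ prod_nonneg prod_le_four 2]
  have hle := volDecF_le_tangentQuartic hsum (x i ^ 2)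
  rw [← add_sum_erase univ _ (mem_univ i)] at hle
  linarith

lemma volDecF_lt_of_card_le_four (hx0 : ∀ i, 0 ≤ x i) (hx2 : ∀ i, x i ≤ 2)
    (hsum : ∑ i, x i = 4) (hcard : #{i | 1 / 5 ≤ x i} ≤ 4) : volDecF x < 72 / 125 := by
  have hcard' : (#{i | 1 / 5 ≤ x i} : ℝ) ≤ 4 := by exact_mod_cast hcard
  have sum_le := sum_le_sum fun i (_ : i ∈ univ) =>
    tangentQuartic_eighteen_fifths_le (hx0 i) (hx2 i)
  rw [sum_mul_add_ite_le, hsum] at sum_le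
  linarith [volDecF_le_tangentQuartic hsum (18 / 5)]

lemma sum_tangentQuartic_majorant_le (hsum : ∑ i, x i = 4) (hcard : 5 ≤ #{i | 1 / 5 ≤ x i}) :
    ∑ i, (64 / 125 * x i + if 1 / 5 ≤ x i then -(32 / 625) else 0) ≤ 224 / 125 := by
  have hcard' : (5 : ℝ) ≤ #{i | 1 / 5 ≤ x i} := by exact_mod_cast hcard
  rw [sum_mul_add_ite_le, hsum]
  linarith

lemma volDecF_le_of_five_le_card (hx0 : ∀ i, 0 ≤ x i) (hx2 : ∀ i, x i ≤ 2)
    (hsum : ∑ i, x i = 4) (hcard : 5 ≤ #{i | 1 / 5 ≤ x i}) : volDecF x ≤ 72 / 125 := by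
  have sum_le := sum_le_sum fun i (_ : i ∈ univ) =>
    tangentQuartic_sixteen_fifths_le (hx0 i) (hx2 i)
  linarith [volDecF_le_tangentQuartic hsum (16 / 5), sum_tangentQuartic_majorant_le hsum hcard]

lemma eq_zero_or_eq_of_volDecF_eq_of_five_le_card (hx0 : ∀ i, 0 ≤ x i) (hx2 : ∀ i, x i ≤ 2)
    (hsum : ∑ i, x i = 4) (hcard : 5 ≤ #{i | 1 / 5 ≤ x i}) (heq : volDecF x = 72 / 125)
    (i : Fin N) : x i = 0 ∨ x i = 4 / 5 := by
  have term_le := fun i (_ : i ∈ univ) => tangentQuartic_sixteen_fifths_le (hx0 i) (hx2 i)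
  have sum_eq : ∑ i, tangentQuartic (16 / 5) (x i)
      = ∑ i, (64 / 125 * x i + if 1 / 5 ≤ x i then -(32 / 625) else 0) := by
    refine le_antisymm (sum_le_sum term_le) ?_
    linarith [volDecF_le_tangentQuartic hsum (16 / 5), sum_tangentQuartic_majorant_le hsum hcard]
  have term_eq := (sum_eq_sum_iff_of_le term_le).1 sum_eq i (mem_univ i)
  by_contra! hne
  exact (tangentQuartic_sixteen_fifths_lt ((hx0 i).lt_of_ne' hne.1) (hx2 i) hne.2).ne term_eq

lemma volDecF_lt_or_five_le_card (hx : ∀ i, 0 ≤ x i) (hsum : ∑ i, x i = 4) :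
    volDecF x < 72 / 125 ∨ (∀ i, x i ≤ 2) ∧ 5 ≤ #{i | 1 / 5 ≤ x i} := by
  by_cases hbig : ∃ i, 2 ≤ x i
  · exact Or.inl (volDecF_lt_of_exists_two_le hx hsum hbig)
  · have hx2 : ∀ i, x i ≤ 2 := fun i => le_of_not_ge fun h => hbig ⟨i, h⟩
    rcases Nat.lt_or_ge #{i | 1 / 5 ≤ x i} 5 with hcard | hcard
    · exact Or.inl (volDecF_lt_of_card_le_four hx hx2 hsum (Nat.le_of_lt_succ hcard))
    · exact Or.inr ⟨hx2, hcard⟩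

lemma volDecF_eq_of_card_eq_five {s : Finset (Fin N)} (hcard : #s = 5)
    (hs : ∀ i ∈ s, x i = 4 / 5) (hs' : ∀ i ∉ s, x i = 0) : volDecF x = 72 / 125 := by
  have sum_pow : ∀ m ≠ 0, ∑ i, x i ^ m = 5 * (4 / 5) ^ m := fun m hm => by
    rw [sum_comp_eq_card_nsmul hs hs' (h := (· ^ m)) (zero_pow hm), hcard, nsmul_eq_mul,
      Nat.cast_ofNat]
  have sum_eq : ∑ i, x i = 4 := by
    rw [sum_comp_eq_card_nsmul hs hs' (h := fun t => t) rfl, hcard]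
    norm_num
  rw [volDecF_eq_powerSums, sum_eq, sum_pow 2 (by norm_num), sum_pow 3 (by norm_num),
    sum_pow 4 (by norm_num)]
  norm_num

end Functional

theorem statement19_general {N : ℕ} (x : Fin N → ℝ) (hx : ∀ i, 0 ≤ x i) (hsum : ∑ i, x i = 4) :
    volDecF x ≤ 72 / 125 ∧
    (volDecF x = 72 / 125 ↔
      ∃ s : Finset (Fin N), s.card = 5 ∧ (∀ i ∈ s, x i = 4 / 5) ∧ ∀ i ∉ s, x i = 0) := by
  have eq_of_extremal : (∃ s : Finset (Fin N), s.card = 5 ∧ (∀ i ∈ s, x i = 4 / 5) ∧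
      ∀ i ∉ s, x i = 0) → volDecF x = 72 / 125 :=
    fun ⟨_, hcard, hs, hs'⟩ => volDecF_eq_of_card_eq_five hcard hs hs'
  rcases volDecF_lt_or_five_le_card hx hsum with hlt | ⟨hx2, hcard⟩
  · exact ⟨hlt.le, fun heq => absurd heq hlt.ne, eq_of_extremal⟩
  · refine ⟨volDecF_le_of_five_le_card hx hx2 hsum hcard, fun heq => ?_, eq_of_extremal⟩
    exact exists_card_eq_of_eq_zero_or_eq (by norm_num)
      (eq_zero_or_eq_of_volDecF_eq_of_five_le_card hx hx2 hsum hcard heq) (by norm_num [hsum])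

/-- Let `N ≥ 5` and `x ∈ [0,1]ᴺ` with `Σ xᵢ = 4`. Then `f(x) ≤ 72/125`,
with equality iff there is a 5-element subset `s` of the indices with `x i = 4/5` for `i ∈ s`
and `x i = 0` otherwise. -/
theorem statement19 {N : ℕ} (hN : 5 ≤ N) (x : Fin N → ℝ)
    (hx : ∀ i, x i ∈ Set.Icc (0:ℝ) 1) (hsum : ∑ i, x i = 4) :
    volDecF x ≤ 72 / 125 ∧
    (volDecF x = 72 / 125 ↔
      ∃ s : Finset (Fin N), s.card = 5 ∧ (∀ i ∈ s, x i = 4 / 5) ∧ ∀ i ∉ s, x i = 0) :=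
  statement19_general x (fun i => (hx i).1) hsum

end
end
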